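/- Fix a rectangle A = ∏_j (a_j,b_j] in ℝ^d, an integer v ≥ 1, positive definite Σ with unit diagonal and smallest eigenvalue σ_*², φ > 0, ε ∈ (0,1], and constants κ > η > 0. Then for all w outside A^{2εκ+1/φ} \ A^{−2εκ}, Σ_{j_1,…,j_v=1}^d sup_{‖y‖_∞ ≤ εσ_*η} |∂_{j_1…j_v} ρ^{A,φ,ε,Σ}(w + y)| ≤ C d^v (εσ_*)^{−v} e^{−(κ−η)²/4}, where C depends only on v. -/

import Mathlib

open MeasureTheory ProbabilityTheory

/-- The piecewise-linear smoothing function g^φ. -/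
noncomputable def gphi (φ t : ℝ) : ℝ :=
  if t ≤ 0 then 1 else if t < 1 / φ then 1 - φ * t else 0

/-- The φ-Lipschitz smoothed indicator of the rectangle ∏ (a_j, b_j]. -/
noncomputable def mrect (d : ℕ) (a b : Fin d → ℝ) (φ : ℝ) (w : Fin d → ℝ) : ℝ :=
  gphi φ (⨆ j, max (w j - b j) (a j - w j))

/-- ρ^{A,φ,ε,Σ}(w) = E[m^{A,φ}(w + εZ)], Z ∼ N(0,Σ) with law γ. -/
noncomputable def rhoFn (d : ℕ) (a b : Fin d → ℝ) (φ ε : ℝ)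
    (γ : Measure (Fin d → ℝ)) (w : Fin d → ℝ) : ℝ :=
  ∫ z, mrect d a b φ (w + ε • z) ∂γ



lemma decomp_exists (d : ℕ) (S : Fin d → Fin d → ℝ) (hS1 : ∀ j, S j j = 1) (σs : ℝ) (hσ : 0 < σs)
    (hglb : σs ^ 2 ∈ lowerBounds {r : ℝ | ∃ x : Fin d → ℝ, (∑ j, (x j) ^ 2) = 1 ∧
        r = ∑ j, ∑ k, x j * S j k * x k})
    (γ : Measure (Fin d → ℝ)) [IsProbabilityMeasure γ]
    (hlin : ∀ l : (Fin d → ℝ) →ₗ[ℝ] ℝ, ∃ vr : NNReal, γ.map l = gaussianReal 0 vr)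
    (hcov : ∀ j k, ∫ z, z j * z k ∂γ = S j k) :
    ∃ ν : Measure (Fin d → ℝ), IsProbabilityMeasure ν ∧
      γ = (ν.prod (Measure.pi (fun _ : Fin d => gaussianReal 0 1))).map
        (fun p => p.1 + σs • p.2) ∧
      ∀ j, ∀ c : ℝ, Integrable (fun y => Real.exp (c * y j)) ν ∧
        ∫ y, Real.exp (c * y j) ∂ν ≤ Real.exp (c ^ 2 / 2) := by
  classical
  have hquad : ∀ x : Fin d → ℝ, σs ^ 2 * ∑ j, (x j) ^ 2 ≤ ∑ j, ∑ k, x j * S j k * x k := by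
    intro x
    rcases eq_or_lt_of_le (Finset.sum_nonneg (fun j _ => sq_nonneg (x j)) : 0 ≤ ∑ j, (x j)^2) with h | h
    · have hx : ∀ j, x j = 0 := by
        intro j
        have := (Finset.sum_eq_zero_iff_of_nonneg (fun j _ => sq_nonneg (x j))).1 h.symm j (Finset.mem_univ _)
        simpa using this
      simp [hx]
    · set r := ∑ j, (x j)^2 with hr
      have hs : (√r)^2 = r := Real.sq_sqrt h.le
      have hs0 : √r ≠ 0 := (Real.sqrt_pos.2 h).ne'
      have h1 := hglb (a := ∑ j, ∑ k, (x j / √r) * S j k * (x k / √r)) ⟨fun j => x j / √r, by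
        simp_rw [div_pow, hs, ← Finset.sum_div]; exact div_self h.ne', rfl⟩
      have h2 : ∑ j, ∑ k, (x j / √r) * S j k * (x k / √r) = (∑ j, ∑ k, x j * S j k * x k) / r := by
        simp_rw [Finset.sum_div]
        refine Finset.sum_congr rfl fun j _ => Finset.sum_congr rfl fun k _ => ?_
        have hsr : r = √r * √r := (Real.mul_self_sqrt h.le).symm
        rw [div_mul_eq_mul_div, div_mul_div_comm, ← hsr]
      rw [h2, le_div_iff₀ h] at h1
      exact h1
  have hsym : ∀ j k, S j k = S k j := by
    intro j k; rw [← hcov, ← hcov]; simp_rw [mul_comm]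
  set M : Matrix (Fin d) (Fin d) ℝ := Matrix.of S - (σs^2) • (1 : Matrix (Fin d) (Fin d) ℝ) with hM
  have hMq : ∀ x : Fin d → ℝ, dotProduct x (M.mulVec x) = (∑ j, ∑ k, x j * S j k * x k) - σs ^ 2 * ∑ j, (x j) ^ 2 := by
    intro x
    rw [hM, Matrix.sub_mulVec, dotProduct_sub, Matrix.smul_mulVec, Matrix.one_mulVec, dotProduct_smul]
    simp only [dotProduct, Matrix.mulVec, Matrix.of_apply, Finset.mul_sum, smul_eq_mul]
    congr 1
    · refine Finset.sum_congr rfl fun j _ => Finset.sum_congr rfl fun k _ => by ring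
    · refine Finset.sum_congr rfl fun j _ => by ring
  have hPSD : M.PosSemidef := by
    refine Matrix.PosSemidef.of_dotProduct_mulVec_nonneg ?_ ?_
    · ext j k
      simp [hM, Matrix.conjTranspose_apply, Matrix.one_apply, hsym j k, eq_comm]
    · intro x
      have := hquad x
      simp only [star_trivial]
      rw [hMq]; linarith
  have hmL : Measurable (WithLp.ofLp : EuclideanSpace ℝ (Fin d) → Fin d → ℝ) := by fun_prop
  refine ⟨(multivariateGaussian 0 M).map WithLp.ofLp, Measure.isProbabilityMeasure_map hmL.aemeasurable, ?_, ?_⟩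
  · have : IsProbabilityMeasure ((multivariateGaussian 0 M).map (WithLp.ofLp : EuclideanSpace ℝ (Fin d) → Fin d → ℝ)) := Measure.isProbabilityMeasure_map hmL.aemeasurable
    set ν := (multivariateGaussian 0 M).map (WithLp.ofLp : EuclideanSpace ℝ (Fin d) → Fin d → ℝ) with hν
    set N := Measure.pi (fun _ : Fin d => gaussianReal 0 1) with hN
    have e1 : (ν.prod N).map (fun p => p.1 + σs • p.2) = (ν.prod (N.map (fun n => σs • n))).map (fun p => p.1 + p.2) := by
      have h := Measure.map_prod_map ν N measurable_id (g := fun n : Fin d → ℝ => σs • n) (by fun_prop)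
      rw [Measure.map_id] at h
      rw [h, Measure.map_map (by fun_prop) (by fun_prop)]
      rfl
    rw [e1]
    have : IsProbabilityMeasure (N.map (fun n => σs • n)) := Measure.isProbabilityMeasure_map (by fun_prop)
    apply Measure.ext_of_charFunDual
    ext L
    rw [charFunDual_map_add_prod_eq_mul]
    set x : Fin d → ℝ := fun j => L (Pi.single j 1) with hx
    have hLx : ∀ z, L z = ∑ j, z j * x j := by
      intro z
      conv_lhs => rw [← Finset.univ_sum_single z]
      rw [map_sum]
      refine Finset.sum_congr rfl fun j _ => ?_
      have : (Pi.single j (z j) : Fin d → ℝ) = z j • Pi.single j 1 := by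
        rw [← Pi.single_smul]; simp
      rw [this, map_smul, smul_eq_mul]
    -- gamma
    obtain ⟨vr, hvr⟩ := hlin L.toLinearMap
    have hvr' : γ.map L = gaussianReal 0 vr := hvr
    have hL2 : ∀ j, MemLp (fun z : Fin d → ℝ => z j) 2 γ := by
      intro j
      obtain ⟨u, hu⟩ := hlin (LinearMap.proj j)
      have h := memLp_id_gaussianReal (μ := 0) (v := u) 2
      rw [← hu] at h
      exact h.comp_of_map (by fun_prop)
    have hvar : (vr : ℝ) = ∑ j, ∑ k, x j * S j k * x k := by
      have h1 : Var[id; gaussianReal 0 vr] = vr := variance_id_gaussianReal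
      rw [variance_eq_integral (by fun_prop)] at h1
      simp only [integral_id_gaussianReal, id, sub_zero] at h1
      rw [← hvr', integral_map (by fun_prop) (by fun_prop)] at h1
      rw [← h1]
      simp_rw [hLx, sq, Finset.sum_mul_sum]
      rw [integral_finsetSum]
      · refine Finset.sum_congr rfl fun j _ => ?_
        rw [integral_finsetSum]
        · refine Finset.sum_congr rfl fun k _ => ?_
          rw [← hcov]
          rw [← integral_const_mul, ← integral_mul_const]
          congr 1; ext z; ring
        · intro k _
          have := ((hL2 j).integrable_mul (hL2 k)).mul_const (x j * x k)
          refine this.congr (ae_of_all _ fun z => ?_)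
          simp only [Pi.mul_apply]; ring
      · intro j _
        refine integrable_finsetSum _ fun k _ => ?_
        have := ((hL2 j).integrable_mul (hL2 k)).mul_const (x j * x k)
        refine this.congr (ae_of_all _ fun z => ?_)
        simp only [Pi.mul_apply]; ring
    have hcγ : charFunDual γ L = Complex.exp (-(vr : ℝ) / 2) := by
      rw [charFunDual_eq_charFun_map_one, hvr', charFun_gaussianReal]
      simp; ring_nf
    have hcν : charFunDual ν L = Complex.exp (-((dotProduct x (M.mulVec x) : ℝ)) / 2) := by
      have := charFun_multivariateGaussian (μ := 0) hPSD (WithLp.toLp 2 x)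
      rw [charFun_apply] at this
      rw [charFunDual_apply, hν, integral_map (by fun_prop) (by fun_prop)]
      simp only [inner_zero_right] at this
      convert this using 2
      · ext y; rw [hLx]; simp [PiLp.inner_apply, mul_comm]
      · simp; ring
    have hcN : charFunDual (N.map (fun n => σs • n)) L = Complex.exp (-((σs^2 * ∑ j, (x j)^2 : ℝ)) / 2) := by
      rw [charFunDual_apply, integral_map (by fun_prop) (by fun_prop)]
      have : ∀ n : Fin d → ℝ, Complex.exp ((L (σs • n) : ℝ) * Complex.I) = ∏ j, Complex.exp ((σs * x j : ℝ) * (n j : ℂ) * Complex.I) := by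
        intro n
        rw [← Complex.exp_sum, hLx]
        congr 1
        push_cast
        rw [Finset.sum_mul]
        refine Finset.sum_congr rfl fun j _ => ?_
        simp; ring
      simp_rw [this]
      rw [hN, integral_fintype_prod_eq_prod (f := fun j (t : ℝ) => Complex.exp ((σs * x j : ℝ) * (t : ℂ) * Complex.I))]
      have h2 : ∀ j, ∫ t, Complex.exp ((σs * x j : ℝ) * (t : ℂ) * Complex.I) ∂(gaussianReal 0 1) = Complex.exp (-((σs * x j)^2 : ℝ)/2) := by
        intro j
        rw [← charFun_apply_real, charFun_gaussianReal]
        simp; ring_nf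
      simp_rw [h2]
      rw [← Complex.exp_sum]
      congr 1
      push_cast
      rw [Finset.mul_sum, neg_div, Finset.sum_div, ← Finset.sum_neg_distrib]
      refine Finset.sum_congr rfl fun j _ => by ring
    rw [Pi.mul_apply, hcγ, hcν, hcN, ← Complex.exp_add]
    congr 1
    rw [hvar, hMq]
    push_cast; ring
  · intro j c
    have hmp := measurePreserving_eval_multivariateGaussian (μ := (0 : EuclideanSpace ℝ (Fin d))) hPSD (i := j)
    have hmap : ((multivariateGaussian 0 M).map (WithLp.ofLp : EuclideanSpace ℝ (Fin d) → Fin d → ℝ)).map (fun y => y j) = gaussianReal 0 (M j j).toNNReal := by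
      rw [Measure.map_map (by fun_prop) hmL]; exact hmp.map_eq
    constructor
    · have h := integrable_exp_mul_gaussianReal (μ := 0) (v := (M j j).toNNReal) c
      rw [← hmap] at h
      exact h.comp_measurable (by fun_prop)
    · have h := mgf_gaussianReal hmap c
      rw [mgf] at h
      rw [h]
      apply Real.exp_le_exp.2
      have : ((M j j).toNNReal : ℝ) ≤ 1 := by
        simp [hM, hS1]; positivity
      nlinarith [mul_le_mul_of_nonneg_right this (sq_nonneg c)]


/-- standard gaussian density -/
noncomputable def pD (x : ℝ) : ℝ := (√(2 * Real.pi))⁻¹ * Real.exp (-(x ^ 2 / 2))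

lemma pD_eq (x : ℝ) : gaussianPDFReal 0 1 x = pD x := by
  simp [gaussianPDFReal, pD, neg_div]

noncomputable def qF : ℕ → ℝ → ℝ
  | 0 => fun x => ∫ t in (0 : ℝ)..x, pD t
  | (m + 1) => deriv^[m] pD

lemma pD_contDiff : ContDiff ℝ (⊤ : ℕ∞) pD := by
  unfold pD; fun_prop

lemma qF_hasDerivAt (m : ℕ) (x : ℝ) : HasDerivAt (qF m) (qF (m + 1) x) x := by
  cases m with
  | zero =>
    have hc : Continuous pD := pD_contDiff.continuous
    exact intervalIntegral.integral_hasDerivAt_right (hc.intervalIntegrable _ _)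
      hc.stronglyMeasurable.stronglyMeasurableAtFilter hc.continuousAt
  | succ m =>
    have h : ContDiff ℝ 1 (deriv^[m] pD) := by
      refine ContDiff.iterate_deriv' 1 m ?_
      exact pD_contDiff.of_le (by exact_mod_cast le_top)
    have := (h.differentiable (by simp) x).hasDerivAt
    simp only [qF, Function.iterate_succ_apply']
    exact this

lemma qF_continuous (m : ℕ) : Continuous (qF m) :=
  continuous_iff_continuousAt.2 fun x => (qF_hasDerivAt m x).continuousAt

lemma poly_bound (P : Polynomial ℝ) : ∃ C, 0 ≤ C ∧ ∀ x : ℝ, |P.eval x| ≤ C * Real.exp (x ^ 2 / 4) := by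
  induction P using Polynomial.induction_on' with
  | add p q hp hq =>
    obtain ⟨C, hC, h⟩ := hp
    obtain ⟨D, hD, h'⟩ := hq
    refine ⟨C + D, by positivity, fun x => ?_⟩
    rw [Polynomial.eval_add, add_mul]
    exact (abs_add_le _ _).trans (add_le_add (h x) (h' x))
  | monomial n a =>
    refine ⟨|a| * (n.factorial * Real.exp 1), by positivity, fun x => ?_⟩
    rw [Polynomial.eval_monomial, abs_mul, mul_assoc]
    refine mul_le_mul_of_nonneg_left ?_ (abs_nonneg _)
    have h := Real.pow_div_factorial_le_exp |x| (abs_nonneg x) n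
    rw [div_le_iff₀ (by positivity)] at h
    rw [abs_pow, mul_assoc, ← Real.exp_add, mul_comm]
    refine h.trans (mul_le_mul_of_nonneg_right (Real.exp_le_exp.2 ?_) (by positivity))
    have := sq_abs x
    nlinarith [sq_nonneg (|x| / 2 - 1)]

lemma qF_bound (m : ℕ) : ∃ C, 0 ≤ C ∧ ∀ x : ℝ, |qF (m + 1) x| ≤ C * Real.exp (-(x ^ 2 / 4)) := by
  obtain ⟨C, hC, h⟩ := poly_bound ((Polynomial.hermite m).map (Int.castRingHom ℝ))
  refine ⟨(√(2 * Real.pi))⁻¹ * C, by positivity, fun x => ?_⟩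
  have e : qF (m + 1) x = (√(2 * Real.pi))⁻¹ * ((-1) ^ m * Polynomial.aeval x (Polynomial.hermite m) * Real.exp (-(x ^ 2 / 2))) := by
    rw [← Polynomial.deriv_gaussian_eq_hermite_mul_gaussian]
    simp only [qF, ← iteratedDeriv_eq_iterate]
    unfold pD
    rw [iteratedDeriv_const_mul_field]
  have e2 : Polynomial.aeval x (Polynomial.hermite m) = ((Polynomial.hermite m).map (Int.castRingHom ℝ)).eval x := by
    rw [Polynomial.eval_map, Polynomial.aeval_def]; rfl
  rw [e, e2, abs_mul, abs_mul, abs_mul, abs_pow, abs_neg, abs_one, one_pow, one_mul, Real.abs_exp,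
    abs_of_nonneg (by positivity : 0 ≤ (√(2 * Real.pi))⁻¹), mul_assoc]
  refine mul_le_mul_of_nonneg_left ?_ (by positivity)
  calc _ ≤ (C * Real.exp (x ^ 2 / 4)) * Real.exp (-(x ^ 2 / 2)) :=
        mul_le_mul_of_nonneg_right (h x) (Real.exp_pos _).le
    _ = _ := by rw [mul_assoc, ← Real.exp_add]; ring_nf

/-- a uniform constant -/
lemma exists_K (v : ℕ) : ∃ K : ℝ, 1 ≤ K ∧ ∀ m, m ≤ v → m ≠ 0 → ∀ x, |qF m x| ≤ K * Real.exp (-(x ^ 2 / 4)) := by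
  choose C hC h using qF_bound
  refine ⟨1 + ∑ m ∈ Finset.range v, C m, by linarith [Finset.sum_nonneg (fun m (_ : m ∈ Finset.range v) => hC m)], ?_⟩
  intro m hm h0 x
  obtain ⟨n, rfl⟩ := Nat.exists_eq_succ_of_ne_zero h0
  refine (h n x).trans (mul_le_mul_of_nonneg_right ?_ (Real.exp_pos _).le)
  have := Finset.single_le_sum (fun m (_ : m ∈ Finset.range v) => hC m) (Finset.mem_range.2 (show n < v by omega))
  linarith

lemma qF_diff_eq (L D : ℝ) (h : L ≤ D) : qF 0 D - qF 0 L = (gaussianReal 0 1).real (Set.Icc L D) := by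
  have hc : Continuous pD := pD_contDiff.continuous
  have h1 : qF 0 D - qF 0 L = ∫ t in L..D, pD t :=
    intervalIntegral.integral_interval_sub_left (hc.intervalIntegrable _ _) (hc.intervalIntegrable _ _)
  rw [h1, intervalIntegral.integral_of_le h, ← integral_Icc_eq_integral_Ioc, measureReal_def,
    gaussianReal_apply_eq_integral 0 one_ne_zero, ENNReal.toReal_ofReal]
  · simp_rw [pD_eq]
  · exact integral_nonneg fun x => gaussianPDFReal_nonneg _ _ _

/-- derivatives of the one-dimensional smoothed interval -/
noncomputable def gF (s : ℝ) (m : ℕ) (lo hi u : ℝ) : ℝ :=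
  if lo ≤ hi then (-1 / s) ^ m * (qF m ((hi - u) / s) - qF m ((lo - u) / s)) else 0

lemma gF_zero (s : ℝ) (hs : 0 < s) (lo hi u : ℝ) :
    gF s 0 lo hi u = (gaussianReal 0 1).real {n | lo ≤ u + s * n ∧ u + s * n ≤ hi} := by
  unfold gF
  have e : {n | lo ≤ u + s * n ∧ u + s * n ≤ hi} = Set.Icc ((lo - u) / s) ((hi - u) / s) := by
    ext n
    simp only [Set.mem_ofPred_eq, Set.mem_Icc, div_le_iff₀ hs, le_div_iff₀ hs]
    constructor <;> rintro ⟨h1, h2⟩ <;> constructor <;> linarith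
  rw [e]
  split_ifs with h
  · rw [pow_zero, one_mul, qF_diff_eq]
    gcongr
  · rw [Set.Icc_eq_empty]
    · simp
    · rw [not_le]; push Not at h; gcongr

lemma gF_hasDerivAt (s : ℝ) (hs : 0 < s) (m : ℕ) (lo hi u : ℝ) :
    HasDerivAt (gF s m lo hi) (gF s (m + 1) lo hi u) u := by
  unfold gF
  split_ifs with h
  · have k : ∀ c : ℝ, HasDerivAt (fun u => qF m ((c - u) / s)) (qF (m + 1) ((c - u) / s) * (-1 / s)) u := by
      intro c
      have h1 : HasDerivAt (fun u : ℝ => (c - u) / s) (-1 / s) u :=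
        ((hasDerivAt_id u).const_sub c).div_const s
      exact (qF_hasDerivAt m _).comp u h1
    refine (((k hi).sub (k lo)).const_mul ((-1 / s) ^ m)).congr_deriv ?_
    rw [pow_succ]; ring
  · exact hasDerivAt_const _ _

lemma gF_measurable (s : ℝ) (m : ℕ) : Measurable (fun p : ℝ × ℝ × ℝ => gF s m p.1 p.2.1 p.2.2) := by
  unfold gF
  refine Measurable.ite (measurableSet_le (by fun_prop) (by fun_prop)) ?_ measurable_const
  have := (qF_continuous m).measurable
  fun_prop

lemma gF_pos_bound (s : ℝ) (hs : 0 < s) (v : ℕ) (K : ℝ) (hK1 : 1 ≤ K)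
    (hK : ∀ m, m ≤ v → m ≠ 0 → ∀ x, |qF m x| ≤ K * Real.exp (-(x ^ 2 / 4)))
    (m : ℕ) (hm : m ≤ v) (h0 : m ≠ 0) (lo hi u : ℝ) :
    |gF s m lo hi u| ≤ (2 * K / s) ^ m * (Real.exp (-(((hi - u) / s) ^ 2 / 4)) + Real.exp (-(((lo - u) / s) ^ 2 / 4))) := by
  unfold gF
  split_ifs with h
  · rw [abs_mul, abs_pow, abs_div, abs_neg, abs_one, abs_of_pos hs]
    have h1 := hK m hm h0 ((hi - u) / s)
    have h2 := hK m hm h0 ((lo - u) / s)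
    have h3 := abs_sub (qF m ((hi - u) / s)) (qF m ((lo - u) / s))
    have h4 : K ≤ (2 * K) ^ m := by
      calc K ≤ 2 * K := by linarith
        _ ≤ _ := le_self_pow₀ (by linarith) h0
    have e : (2 * K / s) ^ m = (1 / s) ^ m * (2 * K) ^ m := by rw [← mul_pow]; ring
    rw [e, mul_assoc]
    refine mul_le_mul_of_nonneg_left ?_ (by positivity)
    refine le_trans ?_ (mul_le_mul_of_nonneg_right h4 (by positivity))
    linarith
  · simp; positivity

lemma gF_bound (s : ℝ) (hs : 0 < s) (v : ℕ) (K : ℝ) (hK1 : 1 ≤ K)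
    (hK : ∀ m, m ≤ v → m ≠ 0 → ∀ x, |qF m x| ≤ K * Real.exp (-(x ^ 2 / 4)))
    (m : ℕ) (hm : m ≤ v) (lo hi u : ℝ) :
    |gF s m lo hi u| ≤ (4 * K / s) ^ m := by
  rcases Nat.eq_zero_or_pos m with rfl | h0
  · rw [gF_zero s hs, abs_of_nonneg measureReal_nonneg, pow_zero]
    exact measureReal_le_one
  · have h := gF_pos_bound s hs v K hK1 hK m hm h0.ne' lo hi u
    have h1 : ∀ x : ℝ, Real.exp (-(x ^ 2 / 4)) ≤ 1 := fun x => by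
      rw [Real.exp_le_one_iff]; nlinarith [sq_nonneg x]
    have h2 : (4 * K / s) ^ m = (2 * K / s) ^ m * 2 ^ m := by rw [← mul_pow]; ring
    rw [h2]
    refine h.trans (mul_le_mul_of_nonneg_left ?_ (by positivity))
    have : (2 : ℝ) ≤ 2 ^ m := le_self_pow₀ (by norm_num) h0.ne'
    linarith [h1 ((hi - u) / s), h1 ((lo - u) / s)]

lemma exp_lin (x l : ℝ) : Real.exp (-(x ^ 2 / 4)) ≤ Real.exp (l * x + l ^ 2) := by
  apply Real.exp_le_exp.2; nlinarith [sq_nonneg (x / 2 + l)]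

/-- inside bound -/
lemma gF_inside (s : ℝ) (hs : 0 < s) (v : ℕ) (K : ℝ) (hK1 : 1 ≤ K)
    (hK : ∀ m, m ≤ v → m ≠ 0 → ∀ x, |qF m x| ≤ K * Real.exp (-(x ^ 2 / 4)))
    (m : ℕ) (hm : m ≤ v) (h0 : m ≠ 0) (lo hi u l : ℝ) :
    |gF s m lo hi u| ≤ (4 * K / s) ^ m *
      (Real.exp (-l * ((hi - u) / s) + l ^ 2) + Real.exp (l * ((lo - u) / s) + l ^ 2)) := by
  refine (gF_pos_bound s hs v K hK1 hK m hm h0 lo hi u).trans ?_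
  have h1 := exp_lin ((hi - u) / s) (-l)
  have h2 := exp_lin ((lo - u) / s) l
  rw [neg_sq] at h1
  gcongr; norm_num

lemma gF_chernoff (s : ℝ) (hs : 0 < s) (lo hi u l : ℝ) (hl : 0 ≤ l) :
    |gF s 0 lo hi u| ≤ Real.exp (l * ((hi - u) / s) + l ^ 2) ∧
    |gF s 0 lo hi u| ≤ Real.exp (-l * ((lo - u) / s) + l ^ 2) := by
  rw [gF_zero s hs, abs_of_nonneg measureReal_nonneg]
  have hm : ∀ t, mgf id (gaussianReal 0 1) t = Real.exp (t ^ 2 / 2) := by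
    intro t
    rw [mgf_gaussianReal (v := 1) (μ := 0) (by simp)]; simp
  constructor
  · have h := measure_le_le_exp_mul_mgf (μ := gaussianReal 0 1) (X := id) (t := -l) ((hi - u) / s) (by linarith)
      (integrable_exp_mul_gaussianReal _)
    refine (measureReal_mono ?_).trans (h.trans ?_)
    · rintro n ⟨-, h2⟩
      simp only [Set.mem_ofPred_eq, id, le_div_iff₀ hs]; linarith
    · rw [hm, ← Real.exp_add]
      apply Real.exp_le_exp.2; nlinarith [sq_nonneg l]
  · have h := measure_ge_le_exp_mul_mgf (μ := gaussianReal 0 1) (X := id) (t := l) ((lo - u) / s) hl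
      (integrable_exp_mul_gaussianReal _)
    refine (measureReal_mono ?_).trans (h.trans ?_)
    · rintro n ⟨h1, -⟩
      simp only [Set.mem_ofPred_eq, id, div_le_iff₀ hs]; linarith
    · rw [hm, ← Real.exp_add]
      apply Real.exp_le_exp.2; nlinarith [sq_nonneg l]

lemma gF_outside (s : ℝ) (hs : 0 < s) (v : ℕ) (K : ℝ) (hK1 : 1 ≤ K)
    (hK : ∀ m, m ≤ v → m ≠ 0 → ∀ x, |qF m x| ≤ K * Real.exp (-(x ^ 2 / 4)))
    (m : ℕ) (hm : m ≤ v) (lo hi u l : ℝ) (hl : 0 ≤ l) :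
    |gF s m lo hi u| ≤ (4 * K / s) ^ m * (2 * Real.exp (l * ((hi - u) / s) + l ^ 2)) ∧
    |gF s m lo hi u| ≤ (4 * K / s) ^ m * (2 * Real.exp (-l * ((lo - u) / s) + l ^ 2)) := by
  by_cases hle : lo ≤ hi
  · rcases Nat.eq_zero_or_pos m with rfl | h0
    · have := gF_chernoff s hs lo hi u l hl
      have p1 := Real.exp_pos (l * ((hi - u) / s) + l ^ 2)
      have p2 := Real.exp_pos (-l * ((lo - u) / s) + l ^ 2)
      constructor <;> rw [pow_zero, one_mul] <;> linarith [this.1, this.2]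
    · have h := gF_pos_bound s hs v K hK1 hK m hm h0.ne' lo hi u
      have hx : (lo - u) / s ≤ (hi - u) / s := by gcongr
      have h42 : (2 * K / s) ^ m ≤ (4 * K / s) ^ m := by gcongr; norm_num
      constructor
      · refine h.trans (mul_le_mul h42 ?_ (by positivity) (by positivity))
        have h1 := exp_lin ((hi - u) / s) l
        have h2 := exp_lin ((lo - u) / s) l
        have h3 : Real.exp (l * ((lo - u) / s) + l ^ 2) ≤ Real.exp (l * ((hi - u) / s) + l ^ 2) := by gcongr
        linarith
      · refine h.trans (mul_le_mul h42 ?_ (by positivity) (by positivity))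
        have h1 := exp_lin ((hi - u) / s) (-l)
        have h2 := exp_lin ((lo - u) / s) (-l)
        rw [neg_sq] at h1 h2
        have h3 : Real.exp (-l * ((hi - u) / s) + l ^ 2) ≤ Real.exp (-l * ((lo - u) / s) + l ^ 2) := by
          apply Real.exp_le_exp.2
          nlinarith [mul_le_mul_of_nonneg_left hx hl]
        linarith
  · simp only [gF, if_neg hle, abs_zero]
    constructor <;> positivity


lemma family_contDiff {d : ℕ} (f : List (Fin d) → (Fin d → ℝ) → ℝ)
    (hf : ∀ L x, HasFDerivAt (f L) (∑ k, f (k :: L) x • (ContinuousLinearMap.proj k : (Fin d → ℝ) →L[ℝ] ℝ)) x)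
    (n : ℕ) : ∀ L, ContDiff ℝ n (f L) := by
  induction n with
  | zero => 
    intro L
    exact contDiff_zero.2 (continuous_iff_continuousAt.2 fun x => (hf L x).continuousAt)
  | succ n ih =>
    intro L
    push_cast
    rw [contDiff_succ_iff_fderiv]
    refine ⟨fun x => (hf L x).differentiableAt, by simp, ?_⟩
    have : fderiv ℝ (f L) = fun x => ∑ k, f (k :: L) x • (ContinuousLinearMap.proj k : (Fin d → ℝ) →L[ℝ] ℝ) :=
      funext fun x => (hf L x).fderiv
    rw [this]
    exact ContDiff.sum fun k _ => (ih _).smul contDiff_const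

lemma family_iterated {d : ℕ} (f : List (Fin d) → (Fin d → ℝ) → ℝ)
    (hf : ∀ L x, HasFDerivAt (f L) (∑ k, f (k :: L) x • (ContinuousLinearMap.proj k : (Fin d → ℝ) →L[ℝ] ℝ)) x)
    (n : ℕ) (J : Fin n → Fin d) (x : Fin d → ℝ) :
    iteratedFDeriv ℝ n (f []) x (fun i => Pi.single (J i) 1) = f (List.ofFn J) x := by
  induction n generalizing x with
  | zero => simp
  | succ n ih =>
    rw [iteratedFDeriv_succ_apply_left]
    have hd : DifferentiableAt ℝ (iteratedFDeriv ℝ n (f [])) x :=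
      (family_contDiff f hf (n + 1) []).differentiable_iteratedFDeriv (by exact_mod_cast Nat.lt_succ_self n) x
    set m : Fin n → (Fin d → ℝ) := Fin.tail (fun i => (Pi.single (J i) 1 : Fin d → ℝ)) with hm
    have h1 : HasFDerivAt (fun y => iteratedFDeriv ℝ n (f []) y m)
        ((ContinuousMultilinearMap.apply ℝ (fun _ : Fin n => (Fin d → ℝ)) ℝ m).comp
          (fderiv ℝ (iteratedFDeriv ℝ n (f [])) x)) x :=
      (ContinuousMultilinearMap.apply ℝ (fun _ : Fin n => (Fin d → ℝ)) ℝ m).hasFDerivAt.comp x hd.hasFDerivAt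
    have h2 : (fun y => iteratedFDeriv ℝ n (f []) y m) = f (List.ofFn (Fin.tail J)) := by
      funext y
      rw [← ih (Fin.tail J) y]; rfl
    rw [h2] at h1
    have h3 := h1.unique (hf _ x)
    have h4 := congrArg (fun T => T (Pi.single (J 0) 1)) h3
    simp only [ContinuousLinearMap.comp_apply, ContinuousMultilinearMap.apply_apply] at h4
    rw [h4, List.ofFn_succ]
    simp [Pi.single_apply]
    rfl

/-- derivative integrand -/
noncomputable def FF {d : ℕ} (a b : Fin d → ℝ) (φ ε s : ℝ) (L : List (Fin d))
    (θ : (Fin d → ℝ) × ℝ) (w : Fin d → ℝ) : ℝ :=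
  ∏ j, gF s (L.count j) (a j - θ.2 / φ) (b j + θ.2 / φ) (w j + ε * θ.1 j)

lemma FF_measurable {d : ℕ} (a b : Fin d → ℝ) (φ ε s : ℝ) (L : List (Fin d)) (w : Fin d → ℝ) :
    Measurable (fun θ => FF a b φ ε s L θ w) := by
  unfold FF
  refine Finset.measurable_prod _ fun j _ => ?_
  have h := gF_measurable s (L.count j)
  exact h.comp (g := fun p : ℝ × ℝ × ℝ => gF s (L.count j) p.1 p.2.1 p.2.2)
    (f := fun θ : (Fin d → ℝ) × ℝ => (a j - θ.2 / φ, b j + θ.2 / φ, w j + ε * θ.1 j)) (by fun_prop)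

lemma sum_count {d : ℕ} (L : List (Fin d)) : ∑ j, L.count j = L.length := by
  have := Multiset.sum_count_eq_card (s := Finset.univ) (m := (L : Multiset (Fin d))) (by simp)
  simpa using this

lemma FF_bound {d : ℕ} (a b : Fin d → ℝ) (φ ε s : ℝ) (hs : 0 < s) (v : ℕ) (K : ℝ) (hK1 : 1 ≤ K)
    (hK : ∀ m, m ≤ v → m ≠ 0 → ∀ x, |qF m x| ≤ K * Real.exp (-(x ^ 2 / 4)))
    (L : List (Fin d)) (hL : L.length ≤ v) (θ : (Fin d → ℝ) × ℝ) (w : Fin d → ℝ) :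
    |FF a b φ ε s L θ w| ≤ (4 * K / s) ^ L.length := by
  unfold FF
  rw [Finset.abs_prod, ← sum_count L, ← Finset.prod_pow_eq_pow_sum]
  refine Finset.prod_le_prod (fun j _ => abs_nonneg _) fun j _ => ?_
  exact gF_bound s hs v K hK1 hK _ (List.count_le_length.trans hL) _ _ _

lemma FF_bound_special {d : ℕ} (a b : Fin d → ℝ) (φ ε s : ℝ) (hs : 0 < s) (v : ℕ) (K : ℝ) (hK1 : 1 ≤ K)
    (hK : ∀ m, m ≤ v → m ≠ 0 → ∀ x, |qF m x| ≤ K * Real.exp (-(x ^ 2 / 4)))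
    (L : List (Fin d)) (hL : L.length ≤ v) (θ : (Fin d → ℝ) × ℝ) (w : Fin d → ℝ) (k : Fin d) (X : ℝ)
    (hX : |gF s (L.count k) (a k - θ.2 / φ) (b k + θ.2 / φ) (w k + ε * θ.1 k)| ≤ (4 * K / s) ^ L.count k * X) :
    |FF a b φ ε s L θ w| ≤ (4 * K / s) ^ L.length * X := by
  unfold FF
  rw [Finset.abs_prod, ← sum_count L, ← Finset.prod_pow_eq_pow_sum,
    ← Finset.mul_prod_erase _ _ (Finset.mem_univ k), ← Finset.mul_prod_erase _ _ (Finset.mem_univ k)]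
  have h1 : ∏ x ∈ Finset.univ.erase k, |gF s (L.count x) (a x - θ.2 / φ) (b x + θ.2 / φ) (w x + ε * θ.1 x)|
      ≤ ∏ x ∈ Finset.univ.erase k, (4 * K / s) ^ L.count x := by
    refine Finset.prod_le_prod (fun j _ => abs_nonneg _) fun j _ => ?_
    exact gF_bound s hs v K hK1 hK _ (List.count_le_length.trans hL) _ _ _
  calc _ ≤ ((4 * K / s) ^ L.count k * X) * ∏ x ∈ Finset.univ.erase k, (4 * K / s) ^ L.count x :=
        mul_le_mul hX h1 (Finset.prod_nonneg fun _ _ => abs_nonneg _) ((abs_nonneg _).trans hX)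
    _ = _ := by ring

lemma FF_hasFDerivAt {d : ℕ} (a b : Fin d → ℝ) (φ ε s : ℝ) (hs : 0 < s) (L : List (Fin d))
    (θ : (Fin d → ℝ) × ℝ) (w : Fin d → ℝ) :
    HasFDerivAt (FF a b φ ε s L θ)
      (∑ k, FF a b φ ε s (k :: L) θ w • (ContinuousLinearMap.proj k : (Fin d → ℝ) →L[ℝ] ℝ)) w := by
  have h1 : ∀ j, HasFDerivAt (fun w : Fin d → ℝ => gF s (L.count j) (a j - θ.2 / φ) (b j + θ.2 / φ) (w j + ε * θ.1 j))
      (gF s (L.count j + 1) (a j - θ.2 / φ) (b j + θ.2 / φ) (w j + ε * θ.1 j) •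
        (ContinuousLinearMap.proj j : (Fin d → ℝ) →L[ℝ] ℝ)) w := by
    intro j
    have h2 : HasFDerivAt (fun w : Fin d → ℝ => w j + ε * θ.1 j) (ContinuousLinearMap.proj j : (Fin d → ℝ) →L[ℝ] ℝ) w :=
      ((ContinuousLinearMap.proj j : (Fin d → ℝ) →L[ℝ] ℝ).hasFDerivAt).add_const _
    exact (gF_hasDerivAt s hs (L.count j) _ _ _).comp_hasFDerivAt w h2
  have h3 := HasFDerivAt.finsetProd (u := Finset.univ) (fun j _ => h1 j)
  unfold FF
  refine h3.congr_fderiv ?_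
  refine Finset.sum_congr rfl fun k _ => ?_
  rw [smul_smul, ← Finset.mul_prod_erase Finset.univ _ (Finset.mem_univ k), mul_comm]
  congr 2
  · simp
  · refine Finset.prod_congr rfl fun j hj => ?_
    rw [List.count_cons_of_ne (Finset.ne_of_mem_erase hj).symm]

lemma norm_proj_le {d : ℕ} (k : Fin d) : ‖(ContinuousLinearMap.proj k : (Fin d → ℝ) →L[ℝ] ℝ)‖ ≤ 1 := by
  refine ContinuousLinearMap.opNorm_le_bound _ zero_le_one fun x => ?_
  rw [one_mul]; exact norm_le_pi_norm x k

lemma sum_proj_norm {d : ℕ} (g : Fin d → ℝ) (B : ℝ) (hB : ∀ k, |g k| ≤ B) :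
    ‖∑ k, g k • (ContinuousLinearMap.proj k : (Fin d → ℝ) →L[ℝ] ℝ)‖ ≤ d * B := by
  have h1 : ∀ k ∈ (Finset.univ : Finset (Fin d)), ‖g k • (ContinuousLinearMap.proj k : (Fin d → ℝ) →L[ℝ] ℝ)‖ ≤ B := by
    intro k _
    rw [norm_smul, Real.norm_eq_abs]
    have := mul_le_mul (hB k) (norm_proj_le k) (norm_nonneg _) ((abs_nonneg _).trans (hB k))
    rwa [mul_one] at this
  have h2 := norm_sum_le_of_le _ h1
  simpa using h2

lemma int_general {d : ℕ} {Θ : Type} [MeasurableSpace Θ] (μ : Measure Θ) [IsProbabilityMeasure μ]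
    (G0 : Θ → (Fin d → ℝ) → ℝ) (G : Fin d → Θ → (Fin d → ℝ) → ℝ) (w : Fin d → ℝ) (B : ℝ)
    (hm : ∀ w, AEStronglyMeasurable (fun θ => G0 θ w) μ) (hI : Integrable (fun θ => G0 θ w) μ)
    (hG : ∀ k, Integrable (fun θ => G k θ w) μ) (hB : ∀ k θ w, |G k θ w| ≤ B)
    (hder : ∀ θ w, HasFDerivAt (G0 θ) (∑ k, G k θ w • (ContinuousLinearMap.proj k : (Fin d → ℝ) →L[ℝ] ℝ)) w) :
    HasFDerivAt (fun w => ∫ θ, G0 θ w ∂μ)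
      (∑ k, (∫ θ, G k θ w ∂μ) • (ContinuousLinearMap.proj k : (Fin d → ℝ) →L[ℝ] ℝ)) w := by
  have hint2 : ∀ k ∈ (Finset.univ : Finset (Fin d)), Integrable (fun θ => G k θ w • (ContinuousLinearMap.proj k : (Fin d → ℝ) →L[ℝ] ℝ)) μ :=
    fun k _ => (hG k).smul_const _
  have hs : AEStronglyMeasurable (fun θ => ∑ k, G k θ w • (ContinuousLinearMap.proj k : (Fin d → ℝ) →L[ℝ] ℝ)) μ :=
    Finset.aestronglyMeasurable_fun_sum _ fun k hk => (hint2 k hk).aestronglyMeasurable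
  have he := integral_finsetSum _ hint2
  have he2 : ∀ k, ∫ θ, G k θ w • (ContinuousLinearMap.proj k : (Fin d → ℝ) →L[ℝ] ℝ) ∂μ =
    (∫ θ, G k θ w ∂μ) • (ContinuousLinearMap.proj k : (Fin d → ℝ) →L[ℝ] ℝ) := fun k => integral_smul_const _ _
  simp only [he2] at he
  rw [← he]
  exact hasFDerivAt_integral_of_dominated_of_fderiv_le (μ := μ) (𝕜 := ℝ)
    (F := fun w θ => G0 θ w)
    (F' := fun w θ => ∑ k, G k θ w • (ContinuousLinearMap.proj k : (Fin d → ℝ) →L[ℝ] ℝ))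
    (x₀ := w) (s := Set.univ) (bound := fun _ => d * B)
    Filter.univ_mem
    (Filter.Eventually.of_forall hm) hI hs
    (ae_of_all _ fun θ w' _ => sum_proj_norm _ B fun k => hB k θ w')
    (integrable_const _)
    (ae_of_all _ fun θ w' _ => hder θ w')

lemma int_hasFDerivAt {d : ℕ} (a b : Fin d → ℝ) (φ ε s : ℝ) (hs : 0 < s)
    (μ : Measure ((Fin d → ℝ) × ℝ)) [IsProbabilityMeasure μ] (L : List (Fin d)) (w : Fin d → ℝ) :
    HasFDerivAt (fun w => ∫ θ, FF a b φ ε s L θ w ∂μ)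
      (∑ k, (∫ θ, FF a b φ ε s (k :: L) θ w ∂μ) • (ContinuousLinearMap.proj k : (Fin d → ℝ) →L[ℝ] ℝ)) w := by
  obtain ⟨K, hK1, hK⟩ := exists_K (L.length + 1)
  have hint : ∀ (L' : List (Fin d)), L'.length ≤ L.length + 1 → ∀ w, Integrable (fun θ => FF a b φ ε s L' θ w) μ := by
    intro L' hL' w
    refine Integrable.of_bound (FF_measurable a b φ ε s L' w).aestronglyMeasurable ((4 * K / s) ^ L'.length) ?_
    exact ae_of_all _ fun θ => FF_bound a b φ ε s hs _ K hK1 hK L' hL' θ w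
  refine int_general μ (FF a b φ ε s L) (fun k => FF a b φ ε s (k :: L)) w ((4 * K / s) ^ (L.length + 1))
    ?_ ?_ ?_ ?_ ?_
  · exact fun w => (FF_measurable a b φ ε s L w).aestronglyMeasurable
  · exact hint L (Nat.le_succ _) w
  · intro k
    exact hint (k :: L) (le_of_eq List.length_cons) w
  · intro k θ w'
    have hb := FF_bound a b φ ε s hs (L.length + 1) K hK1 hK (k :: L) (le_of_eq List.length_cons) θ w'
    rwa [List.length_cons] at hb
  · exact fun θ w' => FF_hasFDerivAt a b φ ε s hs L θ w'

/-- indicator of the enlarged rectangle -/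
noncomputable def II {d : ℕ} (a b : Fin d → ℝ) (φ : ℝ) (u : Fin d → ℝ) (t : ℝ) : ℝ :=
  Set.indicator {p : (Fin d → ℝ) × ℝ | ∀ j, a j - p.2 / φ ≤ p.1 j ∧ p.1 j ≤ b j + p.2 / φ} (fun _ => 1) (u, t)

lemma II_meas_set {d : ℕ} (a b : Fin d → ℝ) (φ : ℝ) :
    MeasurableSet {p : (Fin d → ℝ) × ℝ | ∀ j, a j - p.2 / φ ≤ p.1 j ∧ p.1 j ≤ b j + p.2 / φ} := by
  have : {p : (Fin d → ℝ) × ℝ | ∀ j, a j - p.2 / φ ≤ p.1 j ∧ p.1 j ≤ b j + p.2 / φ} =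
      ⋂ j, ({p : (Fin d → ℝ) × ℝ | a j - p.2 / φ ≤ p.1 j} ∩ {p | p.1 j ≤ b j + p.2 / φ}) := by
    ext p; simp
  rw [this]
  exact MeasurableSet.iInter fun j => (measurableSet_le (by fun_prop) (by fun_prop)).inter
    (measurableSet_le (by fun_prop) (by fun_prop))

lemma II_measurable {d : ℕ} (a b : Fin d → ℝ) (φ : ℝ) :
    Measurable (fun p : (Fin d → ℝ) × ℝ => II a b φ p.1 p.2) :=
  measurable_const.indicator (II_meas_set a b φ)

lemma II_abs_le {d : ℕ} (a b : Fin d → ℝ) (φ : ℝ) (u : Fin d → ℝ) (t : ℝ) : ‖II a b φ u t‖ ≤ 1 := by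
  unfold II
  rw [Set.indicator_apply]; split_ifs <;> simp

lemma gphi_eq (φ : ℝ) (hφ : 0 < φ) (M : ℝ) :
    gphi φ M = ∫ t in Set.Icc (0 : ℝ) 1, Set.indicator {t : ℝ | M ≤ t / φ} (fun _ => (1 : ℝ)) t := by
  have hm : MeasurableSet {t : ℝ | M ≤ t / φ} := measurableSet_le (by fun_prop) (by fun_prop)
  rw [integral_indicator_const _ hm, smul_eq_mul, mul_one, measureReal_restrict_apply hm]
  have : {t : ℝ | M ≤ t / φ} ∩ Set.Icc 0 1 = Set.Icc (max (φ * M) 0) 1 := by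
    ext t
    simp only [Set.mem_inter_iff, Set.mem_ofPred_eq, Set.mem_Icc, le_div_iff₀ hφ, max_le_iff, mul_comm M φ]
    tauto
  rw [this, measureReal_def, Real.volume_Icc]
  unfold gphi
  split_ifs with h1 h2
  · rw [max_eq_right (by nlinarith)]; simp
  · push Not at h1
    rw [lt_div_iff₀ hφ] at h2
    rw [max_eq_left (by positivity), ENNReal.toReal_ofReal (by nlinarith)]
  · push Not at h1 h2
    rw [div_le_iff₀ hφ] at h2
    rw [max_eq_left (by positivity), ENNReal.ofReal_of_nonpos (by nlinarith)]; simp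

lemma mrect_eq {d : ℕ} (hd : 0 < d) (a b : Fin d → ℝ) (φ : ℝ) (hφ : 0 < φ) (u : Fin d → ℝ) :
    mrect d a b φ u = ∫ t in Set.Icc (0 : ℝ) 1, II a b φ u t := by
  have : Nonempty (Fin d) := ⟨⟨0, hd⟩⟩
  unfold mrect
  rw [gphi_eq φ hφ]
  refine integral_congr_ae (ae_of_all _ fun t => ?_)
  unfold II
  simp only [Set.indicator_apply, Set.mem_ofPred_eq]
  have : (⨆ j, max (u j - b j) (a j - u j)) ≤ t / φ ↔ ∀ j, a j - t / φ ≤ u j ∧ u j ≤ b j + t / φ := by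
    rw [ciSup_le_iff (Set.finite_range _).bddAbove]
    refine forall_congr' fun j => ?_
    rw [max_le_iff]
    constructor <;> rintro ⟨h1, h2⟩ <;> constructor <;> linarith
  simp only [this]

lemma rho_eq {d : ℕ} (hd : 0 < d) (a b : Fin d → ℝ) (φ : ℝ) (hφ : 0 < φ) (ε : ℝ) (hε : 0 < ε)
    (σs : ℝ) (hσ : 0 < σs) (ν : Measure (Fin d → ℝ)) [IsProbabilityMeasure ν] (w : Fin d → ℝ) :
    rhoFn d a b φ ε ((ν.prod (Measure.pi (fun _ : Fin d => gaussianReal 0 1))).map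
        (fun p => p.1 + σs • p.2)) w =
      ∫ θ, FF a b φ ε (ε * σs) [] θ w ∂(ν.prod (volume.restrict (Set.Icc (0 : ℝ) 1))) := by
  set N := Measure.pi (fun _ : Fin d => gaussianReal 0 1) with hN
  have hvol : IsProbabilityMeasure (volume.restrict (Set.Icc (0 : ℝ) 1)) := ⟨by simp⟩
  set T := volume.restrict (Set.Icc (0 : ℝ) 1) with hT
  have hs : 0 < ε * σs := by positivity
  have hmm : StronglyMeasurable (mrect d a b φ) := by
    have : mrect d a b φ = fun u => ∫ t, II a b φ u t ∂T := funext fun u => mrect_eq hd a b φ hφ u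
    rw [this]
    exact (II_measurable a b φ).stronglyMeasurable.integral_prod_right'
  have hmb : ∀ u, ‖mrect d a b φ u‖ ≤ 1 := by
    intro u
    rw [mrect_eq hd a b φ hφ]
    have := norm_integral_le_of_norm_le_const (μ := T) (ae_of_all _ fun t => II_abs_le a b φ u t)
    simpa using this
  unfold rhoFn
  have hmA : AEStronglyMeasurable (fun z => mrect d a b φ (w + ε • z)) ((ν.prod N).map (fun p => p.1 + σs • p.2)) :=
    (hmm.comp_measurable (g := fun z : Fin d → ℝ => w + ε • z) (by fun_prop)).aestronglyMeasurable
  have hmB : Integrable (fun p : (Fin d → ℝ) × (Fin d → ℝ) => mrect d a b φ (w + ε • (p.1 + σs • p.2))) (ν.prod N) :=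
    Integrable.of_bound (hmm.comp_measurable (g := fun p : (Fin d → ℝ) × (Fin d → ℝ) => w + ε • (p.1 + σs • p.2))
      (by fun_prop)).aestronglyMeasurable 1 (ae_of_all _ fun p => hmb _)
  rw [integral_map (by fun_prop) hmA, integral_prod _ hmB]
  rw [integral_prod _ (by
    obtain ⟨K, hK1, hK⟩ := exists_K 0
    exact Integrable.of_bound (FF_measurable a b φ ε (ε * σs) [] w).aestronglyMeasurable _
      (ae_of_all _ fun θ => FF_bound a b φ ε _ hs 0 K hK1 hK [] (by simp) θ w))]
  refine integral_congr_ae (ae_of_all _ fun y => ?_)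
  simp only
  simp_rw [mrect_eq hd a b φ hφ]
  rw [integral_integral_swap (by
    refine Integrable.of_bound ?_ 1 (ae_of_all _ fun p => II_abs_le a b φ _ _)
    exact ((II_measurable a b φ).comp (f := fun p : (Fin d → ℝ) × ℝ => (w + ε • (y + σs • p.1), p.2)) (by fun_prop)).aestronglyMeasurable)]
  refine integral_congr_ae (ae_of_all _ fun t => ?_)
  simp only [FF, List.count_nil, gF_zero _ hs]
  have hset : ∀ n : Fin d → ℝ, II a b φ (w + ε • (y + σs • n)) t =
      Set.indicator (Set.pi Set.univ fun j => {n : ℝ | a j - t / φ ≤ w j + ε * y j + ε * σs * n ∧ w j + ε * y j + ε * σs * n ≤ b j + t / φ})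
        (fun _ => (1 : ℝ)) n := by
    intro n
    have e : ∀ j, w j + ε * (y j + σs * n j) = w j + ε * y j + ε * σs * n j := fun j => by ring
    have hiff : (w + ε • (y + σs • n), t) ∈ {p : (Fin d → ℝ) × ℝ | ∀ j, a j - p.2 / φ ≤ p.1 j ∧ p.1 j ≤ b j + p.2 / φ} ↔
        n ∈ (Set.pi Set.univ fun j => {n : ℝ | a j - t / φ ≤ w j + ε * y j + ε * σs * n ∧ w j + ε * y j + ε * σs * n ≤ b j + t / φ}) := by
      simp only [Set.mem_univ_pi, Set.mem_ofPred_eq, Pi.add_apply, Pi.smul_apply, smul_eq_mul, e]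
    unfold II
    by_cases h : n ∈ (Set.pi Set.univ fun j => {n : ℝ | a j - t / φ ≤ w j + ε * y j + ε * σs * n ∧ w j + ε * y j + ε * σs * n ≤ b j + t / φ})
    · rw [Set.indicator_of_mem h, Set.indicator_of_mem (hiff.2 h)]
    · rw [Set.indicator_of_notMem h, Set.indicator_of_notMem (fun h' => h (hiff.1 h'))]
  simp_rw [hset]
  have hms : MeasurableSet (Set.pi Set.univ fun j => {n : ℝ | a j - t / φ ≤ w j + ε * y j + ε * σs * n ∧ w j + ε * y j + ε * σs * n ≤ b j + t / φ}) :=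
    MeasurableSet.univ_pi fun j =>
      (measurableSet_le (f := fun _ : ℝ => a j - t / φ) (g := fun n => w j + ε * y j + ε * σs * n) (by fun_prop) (by fun_prop)).inter
        (measurableSet_le (f := fun n : ℝ => w j + ε * y j + ε * σs * n) (g := fun _ => b j + t / φ) (by fun_prop) (by fun_prop))
  rw [integral_indicator_const _ hms,
    smul_eq_mul, mul_one, measureReal_def, hN, Measure.pi_pi, ENNReal.toReal_prod]
  rfl

lemma exp_helper (ε σs δ X Y : ℝ) (hε : 0 < ε) (hσ : 0 < σs) (hσ1 : σs ≤ 1) (hδ : 0 < δ)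
    (hX : X ≤ -(2 * δ) * ε) :
    Real.exp ((σs * (δ / 2)) * ((X - ε * Y) / (ε * σs)) + (σs * (δ / 2)) ^ 2) ≤
      Real.exp (-(3 / 4) * δ ^ 2) * Real.exp (-(δ / 2) * Y) := by
  rw [← Real.exp_add]
  apply Real.exp_le_exp.2
  have e : (σs * (δ / 2)) * ((X - ε * Y) / (ε * σs)) = (δ / 2) * (X / ε) - (δ / 2) * Y := by
    field_simp
  have h1 : X / ε ≤ -(2 * δ) := by rwa [div_le_iff₀ hε]
  have h2 : (σs * (δ / 2)) ^ 2 ≤ (δ / 2) ^ 2 := by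
    apply pow_le_pow_left₀ (by positivity); nlinarith
  rw [e]
  nlinarith [mul_le_mul_of_nonneg_left h1 (by positivity : 0 ≤ δ / 2)]

lemma FF_point {d : ℕ} (a b : Fin d → ℝ) (φ ε σs κ η : ℝ) (hφ : 0 < φ) (hε : 0 < ε) (hσ : 0 < σs) (hσ1 : σs ≤ 1)
    (hη : 0 < η) (hκ : η < κ) (v : ℕ) (hv : 1 ≤ v) (K : ℝ) (hK1 : 1 ≤ K)
    (hK : ∀ m, m ≤ v → m ≠ 0 → ∀ x, |qF m x| ≤ K * Real.exp (-(x ^ 2 / 4)))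
    (J : Fin v → Fin d) (w y : Fin d → ℝ)
    (hw : ¬((∀ j, a j - (2 * ε * κ + 1 / φ) < w j ∧ w j ≤ b j + (2 * ε * κ + 1 / φ)) ∧
          ¬(∀ j, a j + 2 * ε * κ < w j ∧ w j ≤ b j - 2 * ε * κ)))
    (hy : ‖y‖ ≤ ε * σs * η) :
    ∃ k, ∀ θ : (Fin d → ℝ) × ℝ, θ.2 ∈ Set.Icc (0 : ℝ) 1 →
      |FF a b φ ε (ε * σs) (List.ofFn J) θ (w + y)| ≤ (4 * K / (ε * σs)) ^ v *
        (2 * Real.exp (-(3 / 4) * (κ - η) ^ 2) *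
          (Real.exp (((κ - η) / 2) * θ.1 k) + Real.exp (-((κ - η) / 2) * θ.1 k))) := by
  have hs : 0 < ε * σs := by positivity
  have hδ : 0 < κ - η := by linarith
  set δ := κ - η with hδd
  have hl : 0 ≤ σs * (δ / 2) := by positivity
  have hyj : ∀ j, |y j| ≤ ε * η := fun j => by
    have h1 : |y j| ≤ ‖y‖ := norm_le_pi_norm y j
    have h2 : ε * σs * η ≤ ε * η := by
      have : ε * η * σs ≤ ε * η := mul_le_of_le_one_right (by positivity) hσ1
      linarith
    linarith
  have hεη : 0 < ε * η := by positivity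
  have key : ∀ (θ : (Fin d → ℝ) × ℝ) (k : Fin d) (X : ℝ),
      |gF (ε * σs) ((List.ofFn J).count k) (a k - θ.2 / φ) (b k + θ.2 / φ) ((w + y) k + ε * θ.1 k)|
        ≤ (4 * K / (ε * σs)) ^ (List.ofFn J).count k * X →
      |FF a b φ ε (ε * σs) (List.ofFn J) θ (w + y)| ≤ (4 * K / (ε * σs)) ^ v * X := by
    intro θ k X hX
    have := FF_bound_special a b φ ε (ε * σs) hs v K hK1 hK (List.ofFn J) (by simp) θ (w + y) k X hX
    rwa [List.length_ofFn] at this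
  have hcount : ∀ k, (List.ofFn J).count k ≤ v := fun k => by
    simpa using (List.count_le_length (a := k) (l := List.ofFn J))
  have hpw : 0 ≤ (4 * K / (ε * σs)) ^ v := by positivity
  by_cases hin : ∀ j, a j + 2 * ε * κ < w j ∧ w j ≤ b j - 2 * ε * κ
  · refine ⟨J ⟨0, hv⟩, fun θ hθ => ?_⟩
    set k := J ⟨0, hv⟩ with hk
    have hne : (List.ofFn J).count k ≠ 0 := by
      rw [Ne, List.count_eq_zero, not_not, List.mem_ofFn]
      exact ⟨_, rfl⟩
    have hτ : 0 ≤ θ.2 / φ := div_nonneg hθ.1 hφ.le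
    have h := key θ k _ (gF_inside (ε * σs) hs v K hK1 hK _ (hcount k) hne _ _ _ (σs * (δ / 2)))
    refine h.trans (mul_le_mul_of_nonneg_left ?_ hpw)
    have hyk := abs_le.1 (hyj k)
    have h1 := exp_helper ε σs δ ((w + y) k - (b k + θ.2 / φ)) (-θ.1 k) hε hσ hσ1 hδ (by
      simp only [Pi.add_apply, hδd]; linarith [(hin k).2])
    have h2 := exp_helper ε σs δ ((a k - θ.2 / φ) - (w + y) k) (θ.1 k) hε hσ hσ1 hδ (by
      simp only [Pi.add_apply, hδd]; linarith [(hin k).1])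
    have e1 : (σs * (δ / 2)) * (((w + y) k - (b k + θ.2 / φ) - ε * -θ.1 k) / (ε * σs)) =
      -(σs * (δ / 2)) * ((b k + θ.2 / φ - ((w + y) k + ε * θ.1 k)) / (ε * σs)) := by ring
    have e2 : (σs * (δ / 2)) * ((a k - θ.2 / φ - (w + y) k - ε * θ.1 k) / (ε * σs)) =
      (σs * (δ / 2)) * ((a k - θ.2 / φ - ((w + y) k + ε * θ.1 k)) / (ε * σs)) := by ring
    rw [e1] at h1
    rw [e2] at h2
    rw [neg_mul_neg] at h1
    have p1 : 0 < Real.exp (-(3 / 4) * δ ^ 2) * Real.exp (δ / 2 * θ.1 k) := by positivity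
    have p2 : 0 < Real.exp (-(3 / 4) * δ ^ 2) * Real.exp (-(δ / 2) * θ.1 k) := by positivity
    linarith
  · have hout : ¬ (∀ j, a j - (2 * ε * κ + 1 / φ) < w j ∧ w j ≤ b j + (2 * ε * κ + 1 / φ)) :=
      fun h => hw ⟨h, hin⟩
    push Not at hout
    obtain ⟨k, hk⟩ := hout
    refine ⟨k, fun θ hθ => ?_⟩
    have hτ : θ.2 / φ ≤ 1 / φ := by gcongr; exact hθ.2
    have hyk := abs_le.1 (hyj k)
    have h := gF_outside (ε * σs) hs v K hK1 hK _ (hcount k) (a k - θ.2 / φ) (b k + θ.2 / φ) ((w + y) k + ε * θ.1 k)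
      (σs * (δ / 2)) hl
    have p1 : 0 < Real.exp (-(3 / 4) * δ ^ 2) * Real.exp (δ / 2 * θ.1 k) := by positivity
    have p2 : 0 < Real.exp (-(3 / 4) * δ ^ 2) * Real.exp (-(δ / 2) * θ.1 k) := by positivity
    by_cases hlo : a k - (2 * ε * κ + 1 / φ) < w k
    · refine (key θ k _ h.1).trans (mul_le_mul_of_nonneg_left ?_ hpw)
      have hkk := hk hlo
      have h2 := exp_helper ε σs δ ((b k + θ.2 / φ) - (w + y) k) (θ.1 k) hε hσ hσ1 hδ (by
        simp only [Pi.add_apply, hδd]; linarith)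
      have e2 : (σs * (δ / 2)) * ((b k + θ.2 / φ - (w + y) k - ε * θ.1 k) / (ε * σs)) =
        (σs * (δ / 2)) * ((b k + θ.2 / φ - ((w + y) k + ε * θ.1 k)) / (ε * σs)) := by ring
      rw [e2] at h2
      linarith
    · refine (key θ k _ h.2).trans (mul_le_mul_of_nonneg_left ?_ hpw)
      push Not at hlo
      have h1 := exp_helper ε σs δ ((w + y) k - (a k - θ.2 / φ)) (-θ.1 k) hε hσ hσ1 hδ (by
        simp only [Pi.add_apply, hδd]; linarith)
      have e1 : (σs * (δ / 2)) * (((w + y) k - (a k - θ.2 / φ) - ε * -θ.1 k) / (ε * σs)) =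
        -(σs * (δ / 2)) * ((a k - θ.2 / φ - ((w + y) k + ε * θ.1 k)) / (ε * σs)) := by ring
      rw [e1, neg_mul_neg] at h1
      linarith


/-- decay of the derivatives of ρ away from the boundary of A.
For every v ≥ 1 there is C = C(v) such that for all w outside A^{2εκ+1/φ} \ A^{−2εκ},
Σ_{j_1…j_v} sup_{‖y‖_∞ ≤ εσ_*η} |∂_{j_1…j_v} ρ^{A,φ,ε,Σ}(w+y)|
  ≤ C d^v (εσ_*)^{−v} e^{−(κ−η)²/4}, whenever κ > η > 0. -/
theorem stmt16 (v : ℕ) (hv : 1 ≤ v) :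
    ∃ C : ℝ, ∀ d : ℕ,
      ∀ (S : Fin d → Fin d → ℝ), (∀ j, S j j = 1) →
      ∀ σs : ℝ, 0 < σs →
      IsGLB {r : ℝ | ∃ x : Fin d → ℝ, (∑ j, (x j) ^ 2) = 1 ∧
        r = ∑ j, ∑ k, x j * S j k * x k} (σs ^ 2) →
      ∀ γ : Measure (Fin d → ℝ), IsProbabilityMeasure γ →
      (∀ l : (Fin d → ℝ) →ₗ[ℝ] ℝ, ∃ vr : NNReal, γ.map l = gaussianReal 0 vr) →
      (∀ j k, ∫ z, z j * z k ∂γ = S j k) →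
      ∀ φ : ℝ, 0 < φ → ∀ ε : ℝ, 0 < ε → ε ≤ 1 →
      ∀ a b : Fin d → ℝ, ∀ κ η : ℝ, 0 < η → η < κ →
      ∀ w : Fin d → ℝ,
        ¬((∀ j, a j - (2 * ε * κ + 1 / φ) < w j ∧ w j ≤ b j + (2 * ε * κ + 1 / φ)) ∧
          ¬(∀ j, a j + 2 * ε * κ < w j ∧ w j ≤ b j - 2 * ε * κ)) →
        ∑ J : Fin v → Fin d,
          (⨆ y : {y : Fin d → ℝ // ‖y‖ ≤ ε * σs * η},
            |iteratedFDeriv ℝ v (rhoFn d a b φ ε γ) (w + y.1)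
              (fun i => Pi.single (J i) 1)|)
          ≤ C * (d : ℝ) ^ v / (ε * σs) ^ v * Real.exp (-(κ - η) ^ 2 / 4) := by
  obtain ⟨K, hK1, hK⟩ := exists_K v
  refine ⟨4 * (4 * K) ^ v, ?_⟩
  intro d S hS1 σs hσ hglb γ hγ hlin hcov φ hφ ε hε hε1 a b κ η hη hκ w hw
  rcases Nat.eq_zero_or_pos d with rfl | hd
  · have : IsEmpty (Fin v → Fin 0) := ⟨fun J => (J ⟨0, hv⟩).elim0⟩
    rw [Finset.univ_eq_empty, Finset.sum_empty]
    positivity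
  have hσ1 : σs ≤ 1 := by
    have h : σs ^ 2 ≤ 1 := hglb.1 ⟨Pi.single ⟨0, hd⟩ 1, by simp [Pi.single_apply], by
      simp [Pi.single_apply, hS1]⟩
    nlinarith
  obtain ⟨ν, hν, hγν, hexp⟩ := decomp_exists d S hS1 σs hσ hglb.1 γ hlin hcov
  have hvol : IsProbabilityMeasure (volume.restrict (Set.Icc (0 : ℝ) 1)) := ⟨by simp⟩
  have hs : 0 < ε * σs := by positivity
  set μ := ν.prod (volume.restrict (Set.Icc (0 : ℝ) 1)) with hμ
  have hrho : rhoFn d a b φ ε γ = fun w => ∫ θ, FF a b φ ε (ε * σs) [] θ w ∂μ := by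
    funext w
    rw [hγν]
    exact rho_eq hd a b φ hφ ε hε σs hσ ν w
  have hit : ∀ (J : Fin v → Fin d) x, iteratedFDeriv ℝ v (rhoFn d a b φ ε γ) x (fun i => Pi.single (J i) 1)
      = ∫ θ, FF a b φ ε (ε * σs) (List.ofFn J) θ x ∂μ := by
    intro J x
    rw [hrho]
    exact family_iterated (fun L w => ∫ θ, FF a b φ ε (ε * σs) L θ w ∂μ)
      (fun L x => int_hasFDerivAt a b φ ε (ε * σs) hs μ L x) v J x
  have hmain : ∀ (J : Fin v → Fin d) (y : Fin d → ℝ), ‖y‖ ≤ ε * σs * η →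
      |∫ θ, FF a b φ ε (ε * σs) (List.ofFn J) θ (w + y) ∂μ| ≤
        4 * (4 * K / (ε * σs)) ^ v * Real.exp (-(κ - η) ^ 2 / 4) := by
    intro J y hy
    obtain ⟨k, hk⟩ := FF_point a b φ ε σs κ η hφ hε hσ hσ1 hη hκ v hv K hK1 hK J w y hw hy
    have hin : ∀ c : ℝ, Integrable (fun θ : (Fin d → ℝ) × ℝ => Real.exp (c * θ.1 k)) μ :=
      fun c => (hexp k c).1.comp_fst _
    have hle : ∀ c : ℝ, ∫ θ, Real.exp (c * θ.1 k) ∂μ ≤ Real.exp (c ^ 2 / 2) := by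
      intro c
      rw [hμ, integral_fun_fst (fun y : Fin d → ℝ => Real.exp (c * y k))]
      simpa using (hexp k c).2
    have hae : ∀ᵐ θ ∂μ, θ.2 ∈ Set.Icc (0 : ℝ) 1 :=
      Measure.quasiMeasurePreserving_snd.ae (ae_restrict_mem measurableSet_Icc)
    have h1 : |∫ θ, FF a b φ ε (ε * σs) (List.ofFn J) θ (w + y) ∂μ| ≤
        ∫ θ, (4 * K / (ε * σs)) ^ v *
        (2 * Real.exp (-(3 / 4) * (κ - η) ^ 2) *
          (Real.exp (((κ - η) / 2) * θ.1 k) + Real.exp (-((κ - η) / 2) * θ.1 k))) ∂μ := by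
      rw [← Real.norm_eq_abs]
      refine norm_integral_le_of_norm_le ((((hin ((κ - η) / 2)).add (hin (-((κ - η) / 2)))).const_mul _).const_mul _) ?_
      filter_upwards [hae] with θ hθ
      exact hk θ hθ
    refine h1.trans ?_
    rw [integral_const_mul, integral_const_mul, integral_add (hin _) (hin _)]
    have h2 := hle ((κ - η) / 2)
    have h3 := hle (-((κ - η) / 2))
    rw [neg_sq] at h3
    calc _ ≤ (4 * K / (ε * σs)) ^ v * (2 * Real.exp (-(3 / 4) * (κ - η) ^ 2) *
          (Real.exp (((κ - η) / 2) ^ 2 / 2) + Real.exp (((κ - η) / 2) ^ 2 / 2))) := by gcongr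
      _ = 4 * (4 * K / (ε * σs)) ^ v * Real.exp (-(3 / 4) * (κ - η) ^ 2 + ((κ - η) / 2) ^ 2 / 2) := by
        rw [Real.exp_add]; ring
      _ ≤ _ := by
        gcongr
        nlinarith [sq_nonneg (κ - η)]
  calc _ ≤ ∑ J : Fin v → Fin d, 4 * (4 * K / (ε * σs)) ^ v * Real.exp (-(κ - η) ^ 2 / 4) := by
        refine Finset.sum_le_sum fun J _ => ?_
        refine Real.iSup_le (fun y => ?_) (by positivity)
        rw [hit]
        exact hmain J y.1 y.2
    _ = _ := by
        simp only [Finset.sum_const, Finset.card_univ, Fintype.card_fun, Fintype.card_fin, nsmul_eq_mul, Nat.cast_pow]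
        rw [div_pow]; ring
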